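/- arXiv:1212.1887 — 2 statements merged into one kernel-verified Lean document; each statement's English description precedes it below -/
import Mathlib

section
/- Let q, a, b be nonzero complex numbers and m ≥ 1 an integer; assume (abq²;q)_{4m−3} ≠ 0 (so all denominators below are nonzero). Then det((q^{i−1} − q^{j−1}) · (aq;q)_{i+j−2} / (abq²;q)_{i+j−2})_{1 ≤ i,j ≤ 2m} = a^{2m(m−1)} q^{2m(m−1)(4m+1)/3} ∏_{k=1}^{m} [(q;q)_{2k−1} (aq;q)_{2k−1} (bq;q)_{2k−2} / (abq²;q)_{2(k+m)−3}]². -/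
/-!
The matrix `A = ((q^k - q^l) μ_{k+l})`, with `μ_n = (aq;q)_n / (abq²;q)_n`, is the Gram matrix of the
skew form `⟨f, g⟩ = L(f(qx) g(x) - f(x) g(qx))` on monomials, where `L` is the little `q`-Jacobi
functional with moments `μ_n`. In the basis of little `q`-Jacobi polynomials with parameters
`(a, b / q)` this form is tridiagonal, so `T A Tᵀ` is skew and tridiagonal for a lower triangular
`T`, and `det A` is the product of the squares of every other off-diagonal entry, divided by
`(det T)²` (`det_skew_tridiagonal`, `det_eq_prod_blockFactor`).

Tridiagonality and the off-diagonal entries come from divided differences. With the coefficients of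
`∏_{i<n} (X - q^i)` as weights, `⟨p_n, x^j⟩` is the divided difference at the nodes `1, q, …, q^n`
of a polynomial of degree less than `n` when `j ≤ n - 2`, hence zero (`rowPair_eq_zero`). For
`j = n - 1` it is the divided difference of `g(y) / (1 - c y)` with `c = a b q^n` and `deg g ≤ n`,
which is `g(1 / c)` times the divided difference of `1 / (1 - c y)` (`sum_nodePoly_div`,
`sum_nodePoly_inv`, `rowPair_div`). Every denominator is a product of factors of
`(abq²;q)_{4m-3}`, so no genericity of `q`, `a` or `b` is needed.

The product of the resulting factors is brought to its final form by induction on `m`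
(`prod_blockFactor`).
-/

/-- The q-shifted factorial `(a;q)_n = ∏_{k=0}^{n-1} (1 - a q^k)`. -/
noncomputable def qPoch (q a : ℂ) (n : ℕ) : ℂ := ∏ k ∈ Finset.range n, (1 - a * q ^ k)

/-! ### Divided differences at the nodes `1, q, …, q^n` -/

/-- The monic polynomial `∏_{i<n} (X - q^i)`. Its coefficients are, up to normalization, the weights
of the divided difference at the nodes `1, q, …, q^n`. -/
noncomputable def nodePoly (q : ℂ) (n : ℕ) : Polynomial ℂ :=
  ∏ i ∈ Finset.range n, (Polynomial.X - Polynomial.C (q ^ i))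

lemma qPoch_succ (q a : ℂ) (n : ℕ) : qPoch q a (n + 1) = qPoch q a n * (1 - a * q ^ n) :=
  Finset.prod_range_succ _ _

lemma qPoch_add (q a : ℂ) (m n : ℕ) :
    qPoch q a (m + n) = qPoch q a m * qPoch q (a * q ^ m) n := by
  unfold qPoch
  rw [Finset.prod_range_add]
  congr 1
  exact Finset.prod_congr rfl fun k _ => by rw [pow_add]; ring

lemma qPoch_ne_zero_of_le {q a : ℂ} {m n : ℕ} (h : qPoch q a n ≠ 0) (hmn : m ≤ n) :
    qPoch q a m ≠ 0 := by
  obtain ⟨d, rfl⟩ := Nat.exists_eq_add_of_le hmn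
  rw [qPoch_add] at h
  exact left_ne_zero_of_mul h

lemma qPoch_shift_ne_zero {q a : ℂ} {r s n : ℕ} (h : qPoch q a n ≠ 0) (hmn : r + s ≤ n) :
    qPoch q (a * q ^ r) s ≠ 0 := by
  have := qPoch_ne_zero_of_le h hmn
  rw [qPoch_add] at this
  exact right_ne_zero_of_mul this

lemma one_sub_ne_zero_of_qPoch {q a : ℂ} {k n : ℕ} (h : qPoch q a n ≠ 0) (hk : k < n) :
    1 - a * q ^ k ≠ 0 :=
  Finset.prod_ne_zero_iff.1 h k (Finset.mem_range.2 hk)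

lemma nodePoly_succ (q : ℂ) (n : ℕ) :
    nodePoly q (n + 1) = nodePoly q n * (Polynomial.X - Polynomial.C (q ^ n)) :=
  Finset.prod_range_succ _ _

lemma nodePoly_monic (q : ℂ) (n : ℕ) : (nodePoly q n).Monic :=
  Polynomial.monic_prod_of_monic _ _ fun _ _ => Polynomial.monic_X_sub_C _

lemma nodePoly_natDegree (q : ℂ) (n : ℕ) : (nodePoly q n).natDegree = n := by
  unfold nodePoly
  rw [Polynomial.natDegree_prod_of_monic _ _ fun _ _ => Polynomial.monic_X_sub_C _]
  simp only [Polynomial.natDegree_X_sub_C, Finset.sum_const, Finset.card_range, smul_eq_mul,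
    mul_one]

lemma nodePoly_coeff_self (q : ℂ) (n : ℕ) : (nodePoly q n).coeff n = 1 := by
  have := nodePoly_monic q n
  rwa [Polynomial.Monic, Polynomial.leadingCoeff, nodePoly_natDegree] at this

lemma nodePoly_coeff_of_lt (q : ℂ) {n k : ℕ} (h : n < k) : (nodePoly q n).coeff k = 0 :=
  Polynomial.coeff_eq_zero_of_natDegree_lt (by rwa [nodePoly_natDegree])

lemma nodePoly_eval (q : ℂ) {n s : ℕ} (h : s < n) : (nodePoly q n).eval (q ^ s) = 0 := by
  unfold nodePoly
  rw [Polynomial.eval_prod]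
  exact Finset.prod_eq_zero (Finset.mem_range.2 h) (by simp)

/-- The divided difference of order `n` annihilates polynomials of degree less than `n`: on the
monomial `y^s` it is the value of `nodePoly q n` at its root `q^s`. -/
lemma sum_nodePoly_eval (q : ℂ) {n N : ℕ} (hN : n < N) (G : Polynomial ℂ)
    (hG : G.natDegree < n) :
    ∑ k ∈ Finset.range N, (nodePoly q n).coeff k * G.eval (q ^ k) = 0 := by
  have h1 : ∀ k, G.eval (q ^ k) = ∑ s ∈ Finset.range n, G.coeff s * (q ^ k) ^ s :=
    fun k => Polynomial.eval_eq_sum_range' hG _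
  simp only [h1, Finset.mul_sum]
  rw [Finset.sum_comm]
  refine Finset.sum_eq_zero fun s hs => ?_
  have h2 := nodePoly_eval q (Finset.mem_range.1 hs)
  rw [Polynomial.eval_eq_sum_range' (n := N) (by rwa [nodePoly_natDegree])] at h2
  calc _ = G.coeff s * ∑ k ∈ Finset.range N, (nodePoly q n).coeff k * (q ^ s) ^ k := by
        rw [Finset.mul_sum]
        exact Finset.sum_congr rfl fun k _ => by ring
    _ = 0 := by rw [h2, mul_zero]

/-- The divided difference of order `n` of the Cauchy kernel `1 / (1 - c y)`. -/
lemma sum_nodePoly_inv (q : ℂ) (n : ℕ) : ∀ (c : ℂ) (N : ℕ), n < N → qPoch q c (n + 1) ≠ 0 →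
    ∑ k ∈ Finset.range N, (nodePoly q n).coeff k * (1 - c * q ^ k)⁻¹
      = (-c) ^ n * q ^ (n.choose 2) * qPoch q q n / qPoch q c (n + 1) := by
  induction n with
  | zero =>
    intro c N hN hc
    rw [Finset.sum_eq_single 0]
    · simp [nodePoly, qPoch]
    · intro k _ hk
      rw [nodePoly_coeff_of_lt q (by omega), zero_mul]
    · intro h; exact absurd (Finset.mem_range.2 hN) h
  | succ n ih =>
    intro c N hN hc
    obtain ⟨N, rfl⟩ : ∃ M, N = M + 1 := ⟨N - 1, by omega⟩
    have h0 : (nodePoly q (n + 1)).coeff 0 = - ((nodePoly q n).coeff 0 * q ^ n) := by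
      rw [nodePoly_succ, Polynomial.mul_coeff_zero, Polynomial.coeff_sub,
        Polynomial.coeff_X_zero, Polynomial.coeff_C_zero]
      ring
    have hs : ∀ k, (nodePoly q (n + 1)).coeff (k + 1)
        = (nodePoly q n).coeff k - (nodePoly q n).coeff (k + 1) * q ^ n := fun k => by
      rw [nodePoly_succ, Polynomial.coeff_mul_X_sub_C]
    have hc1 : qPoch q c (n + 1) ≠ 0 := qPoch_ne_zero_of_le hc (by omega)
    have hc2 : qPoch q (c * q) (n + 1) ≠ 0 := by
      have := qPoch_shift_ne_zero (r := 1) (s := n + 1) hc (by omega)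
      simpa using this
    have e1 := ih c (N + 1) (by omega) hc1
    have e2 := ih (c * q) N (by omega) hc2
    -- Multiplication by `X - q^n` turns the sum into a `q`-difference in `c`.
    have key : ∑ k ∈ Finset.range (N + 1), (nodePoly q (n + 1)).coeff k * (1 - c * q ^ k)⁻¹
        = ∑ k ∈ Finset.range N, (nodePoly q n).coeff k * (1 - c * q * q ^ k)⁻¹
          - q ^ n * ∑ k ∈ Finset.range (N + 1), (nodePoly q n).coeff k * (1 - c * q ^ k)⁻¹ := by
      rw [Finset.sum_range_succ', Finset.sum_range_succ' _ N, h0]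
      simp only [hs, sub_mul, Finset.sum_sub_distrib, mul_add, Finset.mul_sum]
      have : ∀ k, (1 - c * q * q ^ k) = 1 - c * q ^ (k + 1) := fun k => by ring
      simp only [this]
      have : ∀ k, (nodePoly q n).coeff (k + 1) * q ^ n * (1 - c * q ^ (k + 1))⁻¹
        = q ^ n * ((nodePoly q n).coeff (k + 1) * (1 - c * q ^ (k + 1))⁻¹) := fun k => by ring
      simp only [this]
      ring
    rw [key, e1, e2]
    have p1 : qPoch q c (n + 1 + 1) = qPoch q c (n + 1) * (1 - c * q ^ (n + 1)) := qPoch_succ _ _ _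
    have p2 : qPoch q c (n + 1 + 1) = (1 - c) * qPoch q (c * q) (n + 1) := by
      rw [add_comm (n + 1) 1, qPoch_add]; simp [qPoch]
    have p3 : qPoch q q (n + 1) = qPoch q q n * (1 - q ^ (n + 1)) := by
      rw [qPoch_succ]; ring
    have f1 : 1 / qPoch q c (n + 1) = (1 - c * q ^ (n + 1)) / qPoch q c (n + 1 + 1) := by
      rw [div_eq_div_iff hc1 hc, p1]; ring
    have f2 : 1 / qPoch q (c * q) (n + 1) = (1 - c) / qPoch q c (n + 1 + 1) := by
      rw [div_eq_div_iff hc2 hc, p2]; ring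
    have hch : (n + 1).choose 2 = n + n.choose 2 := by
      rw [Nat.choose_succ_succ' n 1, Nat.choose_one_right]
    rw [p3, hch, div_eq_mul_one_div _ (qPoch q (c * q) (n + 1)), f2,
      div_eq_mul_one_div _ (qPoch q c (n + 1)), f1]
    field_simp
    ring

/-- The divided difference of `g(y) / (1 - c y)` for `deg g ≤ n`: only the residue at `y = 1 / c`
contributes, because `(g(y) - g(1 / c)) / (1 - c y)` is a polynomial of degree less than `n`. -/
lemma sum_nodePoly_div (q c : ℂ) {n N : ℕ} (hn : 0 < n) (hN : n < N) (hc0 : c ≠ 0)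
    (hc : qPoch q c (n + 1) ≠ 0) (g : Polynomial ℂ) (hg : g.natDegree ≤ n) :
    ∑ k ∈ Finset.range N, (nodePoly q n).coeff k * (g.eval (q ^ k) * (1 - c * q ^ k)⁻¹)
      = g.eval c⁻¹ * ((-c) ^ n * q ^ (n.choose 2) * qPoch q q n / qPoch q c (n + 1)) := by
  set Q := g /ₘ (Polynomial.X - Polynomial.C c⁻¹) with hQ
  have hQd : Q.natDegree < n := by
    rw [hQ, Polynomial.natDegree_divByMonic _ (Polynomial.monic_X_sub_C _),
      Polynomial.natDegree_X_sub_C]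
    omega
  have hdecomp : ∀ y, g.eval y = g.eval c⁻¹ + (y - c⁻¹) * Q.eval y := fun y => by
    have := congrArg (Polynomial.eval y)
      (Polynomial.modByMonic_add_div g (Polynomial.X - Polynomial.C c⁻¹))
    rw [Polynomial.modByMonic_X_sub_C_eq_C_eval] at this
    rw [← this]; simp [hQ]
  have key : ∀ k ∈ Finset.range N,
      (nodePoly q n).coeff k * (g.eval (q ^ k) * (1 - c * q ^ k)⁻¹)
      = g.eval c⁻¹ * ((nodePoly q n).coeff k * (1 - c * q ^ k)⁻¹)
        - c⁻¹ * ((nodePoly q n).coeff k * Q.eval (q ^ k)) := by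
    intro k _
    rcases lt_or_ge n k with h | h
    · simp [nodePoly_coeff_of_lt q h]
    · have h1 := one_sub_ne_zero_of_qPoch hc (show k < n + 1 by omega)
      rw [hdecomp (q ^ k)]
      field_simp
      ring
  rw [Finset.sum_congr rfl key, Finset.sum_sub_distrib, ← Finset.mul_sum, ← Finset.mul_sum,
    sum_nodePoly_eval q hN Q hQd, sum_nodePoly_inv q n c N hN hc]
  ring

/-! ### Skew-symmetric tridiagonal determinants -/

/-- An even-sized skew-symmetric tridiagonal determinant only sees every other off-diagonal
entry. -/
lemma det_skew_tridiagonal (m : ℕ) : ∀ S : ℕ → ℕ → ℂ, (∀ i j, S j i = - S i j) →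
    (∀ i j, i < 2 * m → j + 2 ≤ i → S i j = 0) →
    Matrix.det (Matrix.of fun i j : Fin (2 * m) => S i j)
      = ∏ k ∈ Finset.range m, (S (2 * k + 1) (2 * k)) ^ 2 := by
  induction m with
  | zero => intro S _ _; simp
  | succ m ih =>
    intro S hS h0
    have h0' : ∀ i j, j < 2 * (m + 1) → i + 2 ≤ j → S i j = 0 := fun i j hj hij => by
      rw [hS j i, h0 j i hj hij, neg_zero]
    have ih' := ih (fun i j => S (i + 2) (j + 2)) (fun i j => hS _ _)
      (fun i j hi hij => h0 _ _ (by omega) (by omega))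
    have hd : ∀ i, S i i = 0 := fun i => by
      have := hS i i
      exact self_eq_neg.1 this
    rw [Finset.prod_range_succ']
    have step : Matrix.det (Matrix.of fun i j : Fin (2 * m + 1 + 1) => S i j)
        = S 1 0 ^ 2 * Matrix.det (Matrix.of fun i j : Fin (2 * m) => S (i + 2) (j + 2)) := by
      have hminor : Matrix.det ((Matrix.of fun i j : Fin (2 * m + 1 + 1) => S i j).submatrix
          Fin.succ (Fin.succAbove (Fin.succ 0)))
          = S 1 0 * Matrix.det (Matrix.of fun i j : Fin (2 * m) => S (i + 2) (j + 2)) := by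
        rw [Matrix.det_succ_column_zero, Fin.sum_univ_succ, Finset.sum_eq_zero]
        · have hsub : (((Matrix.of fun i j : Fin (2 * m + 1 + 1) => S i j).submatrix Fin.succ
              (Fin.succAbove (Fin.succ 0))).submatrix (Fin.succAbove 0) Fin.succ)
              = Matrix.of fun i j : Fin (2 * m) => S (i + 2) (j + 2) := by
            ext i j
            simp [Fin.succAbove, Fin.lt_def]
          rw [hsub]
          simp
        · intro i _
          have : S ((i : ℕ) + 1 + 1) 0 = 0 := h0 _ _ (by omega) (by omega)
          rw [Matrix.submatrix_apply, Matrix.of_apply]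
          have e0 : ((Fin.succAbove (Fin.succ (0 : Fin (2 * m + 1))) 0 : Fin (2 * m + 1 + 1)) : ℕ)
              = 0 := by simp [Fin.succAbove]
          rw [e0]
          simp only [Fin.val_succ, this, mul_zero, zero_mul]
      rw [Matrix.det_succ_row_zero, Fin.sum_univ_succ, Fin.sum_univ_succ, Finset.sum_eq_zero,
        hminor]
      · simp only [Matrix.of_apply, Fin.val_zero, Fin.val_succ, hd, hS 1 0]
        ring
      · intro j _
        have : S 0 ((j : ℕ) + 1 + 1) = 0 := h0' _ _ (by omega) (by omega)
        simp only [Matrix.of_apply, Fin.val_zero, Fin.val_succ, this, mul_zero, zero_mul]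
    have e : Matrix.det (Matrix.of fun i j : Fin (2 * (m + 1)) => S i j)
      = Matrix.det (Matrix.of fun i j : Fin (2 * m + 1 + 1) => S i j) := rfl
    rw [e, step, ih', mul_comm]
    congr 1

/-! ### The skew form in the little `q`-Jacobi basis -/

/-- The polynomial `(x y; q)_n` in the variable `y`. -/
noncomputable def qPochPoly (q x : ℂ) (n : ℕ) : Polynomial ℂ :=
  ∏ i ∈ Finset.range n, (1 - Polynomial.C (x * q ^ i) * Polynomial.X)

lemma qPochPoly_eval (q x y : ℂ) (n : ℕ) : (qPochPoly q x n).eval y = qPoch q (x * y) n := by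
  unfold qPochPoly qPoch
  rw [Polynomial.eval_prod]
  refine Finset.prod_congr rfl fun i _ => ?_
  rw [Polynomial.eval_sub, Polynomial.eval_one, Polynomial.eval_mul, Polynomial.eval_C,
    Polynomial.eval_X]
  ring

lemma qPochPoly_natDegree_le (q x : ℂ) (n : ℕ) : (qPochPoly q x n).natDegree ≤ n := by
  unfold qPochPoly
  refine (Polynomial.natDegree_prod_le _ _).trans ?_
  refine (Finset.sum_le_card_nsmul _ _ 1 fun i _ => ?_).trans (by simp)
  refine (Polynomial.natDegree_sub_le _ _).trans ?_
  simp only [Polynomial.natDegree_one, zero_le, sup_of_le_right]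
  exact (Polynomial.natDegree_C_mul_le _ _).trans Polynomial.natDegree_X_le

/-- The entries of the matrix, indexed from `0`: the value of the skew form on `x^k, x^l`. -/
noncomputable def entry (q a b : ℂ) (k l : ℕ) : ℂ :=
  (q ^ k - q ^ l) * qPoch q (a * q) (k + l) / qPoch q (a * b * q ^ 2) (k + l)

/-- Coefficient of `x^k` in the `n`-th basis polynomial, an unnormalized little `q`-Jacobi
polynomial with parameters `a, b / q`. The polynomial of degree `1` is replaced by `x`, which avoids
the leading coefficient `1 - a b q`; this is harmless because its constant term is
irrelevant for tridiagonality. -/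
noncomputable def jacobiCoeff (q a b : ℂ) (n k : ℕ) : ℂ :=
  if n = 1 then (if k = 1 then 1 else 0) else
    (nodePoly q n).coeff k * qPoch q (a * b * q ^ n) k * qPoch q (a * q * q ^ k) (n - k)

/-- The value of the skew form on the `n`-th basis polynomial and `x^j`. The sum is complete as
soon as `n < N`. -/
noncomputable def rowPair (q a b : ℂ) (N n j : ℕ) : ℂ :=
  ∑ k ∈ Finset.range N, jacobiCoeff q a b n k * entry q a b k j

lemma entry_skew (q a b : ℂ) (k l : ℕ) : entry q a b l k = - entry q a b k l := by
  unfold entry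
  rw [add_comm l k]; ring

lemma jacobiCoeff_of_lt (q a b : ℂ) {n k : ℕ} (h : n < k) : jacobiCoeff q a b n k = 0 := by
  unfold jacobiCoeff
  split_ifs with h1 h2
  · omega
  · rfl
  · rw [nodePoly_coeff_of_lt q h]; ring

lemma jacobiCoeff_zero (q a b : ℂ) : jacobiCoeff q a b 0 0 = 1 := by
  simp [jacobiCoeff, nodePoly, qPoch]

lemma jacobiCoeff_one (q a b : ℂ) : jacobiCoeff q a b 1 1 = 1 := by simp [jacobiCoeff]

lemma jacobiCoeff_self (q a b : ℂ) (r : ℕ) :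
    jacobiCoeff q a b (r + 2) (r + 2) = qPoch q (a * b * q ^ 2 * q ^ r) (r + 2) := by
  have : a * b * q ^ (r + 2) = a * b * q ^ 2 * q ^ r := by ring
  simp only [jacobiCoeff, nodePoly_coeff_self, this]
  rw [if_neg (by omega)]
  simp [qPoch]

lemma jacobiCoeff_mul_entry {q a b : ℂ} {r k j : ℕ} (hk : k ≤ r + 2) :
    jacobiCoeff q a b (r + 2) k * entry q a b k j
      = qPoch q (a * q) (r + 2) * ((nodePoly q (r + 2)).coeff k * ((q ^ k - q ^ j) *
        qPoch q (a * q * q ^ k) j)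
        * (qPoch q (a * b * q ^ 2 * q ^ r) k / qPoch q (a * b * q ^ 2) (k + j))) := by
  have h1 : qPoch q (a * q) (r + 2)
      = qPoch q (a * q) k * qPoch q (a * q * q ^ k) (r + 2 - k) := by
    rw [← qPoch_add]; congr 1; omega
  have : a * b * q ^ (r + 2) = a * b * q ^ 2 * q ^ r := by ring
  unfold jacobiCoeff entry
  rw [if_neg (by omega), this, h1, qPoch_add q (a * q) k j]
  ring

/-- The skew form vanishes on the basis polynomial of degree `r + 2` and `x^j`, `j ≤ r`: the sum is
a divided difference of order `r + 2` of a polynomial of degree `r + 1`. -/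
lemma rowPair_eq_zero {q a b : ℂ} {N r j : ℕ} (hj : j ≤ r) (hN : r + 2 < N)
    (h0 : qPoch q (a * b * q ^ 2) (2 * r + 2) ≠ 0) : rowPair q a b N (r + 2) j = 0 := by
  set G : Polynomial ℂ := (Polynomial.X - Polynomial.C (q ^ j)) * qPochPoly q (a * q) j
    * qPochPoly q (a * b * q ^ 2 * q ^ j) (r - j) with hG
  have hGd : G.natDegree < r + 2 := by
    have e1 : ((Polynomial.X - Polynomial.C (q ^ j)) * qPochPoly q (a * q) j).natDegree ≤ 1 + j :=
      Polynomial.natDegree_mul_le_of_le (Polynomial.natDegree_X_sub_C_le _)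
        (qPochPoly_natDegree_le _ _ _)
    have e2 : G.natDegree ≤ 1 + j + (r - j) :=
      Polynomial.natDegree_mul_le_of_le e1 (qPochPoly_natDegree_le _ _ _)
    omega
  have key : ∀ k ∈ Finset.range N, jacobiCoeff q a b (r + 2) k * entry q a b k j
      = qPoch q (a * q) (r + 2) / qPoch q (a * b * q ^ 2) r *
        ((nodePoly q (r + 2)).coeff k * G.eval (q ^ k)) := by
    intro k _
    rcases lt_or_ge (r + 2) k with h | h
    · rw [jacobiCoeff_of_lt q a b h, nodePoly_coeff_of_lt q h]; ring
    · have hU : qPoch q (a * b * q ^ 2) r ≠ 0 := qPoch_ne_zero_of_le h0 (by omega)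
      have hW : qPoch q (a * b * q ^ 2) (k + j) ≠ 0 := qPoch_ne_zero_of_le h0 (by omega)
      have hr : qPoch q (a * b * q ^ 2 * q ^ r) k / qPoch q (a * b * q ^ 2) (k + j)
          = qPoch q (a * b * q ^ 2 * q ^ j * q ^ k) (r - j) / qPoch q (a * b * q ^ 2) r := by
        rw [div_eq_div_iff hW hU, mul_comm, ← qPoch_add, mul_assoc (a * b * q ^ 2), ← pow_add,
          add_comm j k, mul_comm (qPoch q (a * b * q ^ 2 * q ^ (k + j)) _), ← qPoch_add]
        congr 1; omega
      rw [jacobiCoeff_mul_entry h, hr, hG]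
      simp only [Polynomial.eval_mul, Polynomial.eval_sub, Polynomial.eval_X, Polynomial.eval_C,
        qPochPoly_eval]
      ring
  unfold rowPair
  rw [Finset.sum_congr rfl key, ← Finset.mul_sum, sum_nodePoly_eval q hN G hGd, mul_zero]

lemma prod_pow_succ (q : ℂ) (s : ℕ) :
    ∏ i ∈ Finset.range s, q ^ (i + 1) = q ^ ((s + 1).choose 2) := by
  induction s with
  | zero => simp
  | succ s ih =>
    rw [Finset.prod_range_succ, ih, Nat.choose_succ_succ' (s + 1) 1, Nat.choose_one_right, ← pow_add,
      add_comm (s + 1)]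

/-- The value at `y = 1 / c`, `c = a b q^(s+1)`, of `c^s (a q y; q)_s`; reversing the order of the
factors extracts `(b q; q)_s`. -/
lemma prod_sub_eq (q a b : ℂ) (s : ℕ) :
    ∏ i ∈ Finset.range s, (a * b * q ^ (s + 1) - a * q * q ^ i)
      = (-a) ^ s * q ^ ((s + 1).choose 2) * qPoch q (b * q) s := by
  unfold qPoch
  rw [← prod_pow_succ, ← Finset.prod_range_reflect (fun k => 1 - b * q * q ^ k)]
  have : (-a) ^ s = ∏ i ∈ Finset.range s, (-a) := by simp
  rw [this, ← Finset.prod_mul_distrib, ← Finset.prod_mul_distrib]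
  refine Finset.prod_congr rfl fun i hi => ?_
  have hi := Finset.mem_range.1 hi
  obtain ⟨d, rfl⟩ : ∃ d, s = i + 1 + d := ⟨s - (i + 1), by omega⟩
  have : i + 1 + d - 1 - i = d := by omega
  rw [this]
  ring

/-- The off-diagonal entry `(r + 2, r + 1)` of the tridiagonal form, divided by the leading
coefficient of the basis polynomial of degree `r + 2`. -/
lemma rowPair_div {q a b : ℂ} (hq : q ≠ 0) (ha : a ≠ 0) (hb : b ≠ 0) {N r : ℕ} (hN : r + 2 < N)
    (h0 : qPoch q (a * b * q ^ 2) (2 * r + 3) ≠ 0) :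
    rowPair q a b N (r + 2) (r + 1) / jacobiCoeff q a b (r + 2) (r + 2)
      = -(a ^ (r + 1) * q ^ (2 * (r + 2).choose 2) * qPoch q (a * q) (r + 2) *
          qPoch q q (r + 2) * qPoch q (b * q) (r + 1) * qPoch q (a * b * q ^ 2) r /
          (qPoch q (a * b * q ^ 2) (2 * r + 3) * qPoch q (a * b * q ^ 2) (2 * r + 1))) := by
  set c := a * b * q ^ 2 * q ^ r with hc
  have hc0 : c ≠ 0 := by positivity
  set g : Polynomial ℂ := (Polynomial.X - Polynomial.C (q ^ (r + 1))) *
    qPochPoly q (a * q) (r + 1) with hg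
  have hgd : g.natDegree ≤ r + 2 := by
    have : g.natDegree ≤ 1 + (r + 1) :=
      Polynomial.natDegree_mul_le_of_le (Polynomial.natDegree_X_sub_C_le _)
        (qPochPoly_natDegree_le _ _ _)
    omega
  have hU : qPoch q (a * b * q ^ 2) r ≠ 0 := qPoch_ne_zero_of_le h0 (by omega)
  have hcn : qPoch q c (r + 2 + 1) ≠ 0 := qPoch_shift_ne_zero h0 (by omega)
  have hcn' : qPoch q c (r + 2) ≠ 0 := qPoch_shift_ne_zero h0 (by omega)
  have key : ∀ k ∈ Finset.range N, jacobiCoeff q a b (r + 2) k * entry q a b k (r + 1)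
      = qPoch q (a * q) (r + 2) / qPoch q (a * b * q ^ 2) r *
        ((nodePoly q (r + 2)).coeff k * (g.eval (q ^ k) * (1 - c * q ^ k)⁻¹)) := by
    intro k _
    rcases lt_or_ge (r + 2) k with h | h
    · rw [jacobiCoeff_of_lt q a b h, nodePoly_coeff_of_lt q h]; ring
    · have hV : qPoch q c k ≠ 0 := qPoch_shift_ne_zero h0 (by omega)
      have hr : qPoch q c k / qPoch q (a * b * q ^ 2) (k + (r + 1))
          = (1 - c * q ^ k)⁻¹ / qPoch q (a * b * q ^ 2) r := by
        have h1 : 1 - c * q ^ k ≠ 0 := one_sub_ne_zero_of_qPoch hcn (by omega)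
        have e : k + (r + 1) = r + (k + 1) := by omega
        rw [e, qPoch_add, ← hc, qPoch_succ]
        field_simp
      rw [jacobiCoeff_mul_entry h, ← hc, hr, hg]
      simp only [Polynomial.eval_mul, Polynomial.eval_sub, Polynomial.eval_X, Polynomial.eval_C,
        qPochPoly_eval]
      ring
  have hrow : rowPair q a b N (r + 2) (r + 1) = qPoch q (a * q) (r + 2) /
      qPoch q (a * b * q ^ 2) r * (g.eval c⁻¹ * ((-c) ^ (r + 2) * q ^ ((r + 2).choose 2) *
        qPoch q q (r + 2) / qPoch q c (r + 2 + 1))) := by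
    unfold rowPair
    rw [Finset.sum_congr rfl key, ← Finset.mul_sum,
      sum_nodePoly_div q c (by omega) hN hc0 hcn g hgd]
  have hgc : g.eval c⁻¹ * c ^ (r + 2) = (1 - c * q ^ (r + 1)) *
      ((-a) ^ (r + 1) * q ^ ((r + 2).choose 2) * qPoch q (b * q) (r + 1)) := by
    rw [← prod_sub_eq, hg]
    simp only [Polynomial.eval_mul, Polynomial.eval_sub, Polynomial.eval_X, Polynomial.eval_C,
        qPochPoly_eval]
    have e1 : ∏ i ∈ Finset.range (r + 1), (a * b * q ^ (r + 1 + 1) - a * q * q ^ i)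
        = c ^ (r + 1) * qPoch q (a * q * c⁻¹) (r + 1) := by
      have : c ^ (r + 1) = ∏ i ∈ Finset.range (r + 1), c := by simp
      unfold qPoch
      rw [this, ← Finset.prod_mul_distrib]
      refine Finset.prod_congr rfl fun i _ => ?_
      have : a * b * q ^ (r + 1 + 1) = c := by rw [hc]; ring
      rw [this]
      field_simp
    rw [e1]
    field_simp
    ring
  have p3 : qPoch q (a * b * q ^ 2) (2 * r + 3)
      = qPoch q (a * b * q ^ 2) r * qPoch q c (r + 2 + 1) := by
    rw [← qPoch_add]; congr 1; omega
  have p2 : qPoch q (a * b * q ^ 2) (2 * r + 1) * (1 - c * q ^ (r + 1))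
      = qPoch q (a * b * q ^ 2) r * qPoch q c (r + 2) := by
    rw [← qPoch_add, show r + (r + 2) = 2 * r + 1 + 1 by omega, qPoch_succ q _ (2 * r + 1), hc]
    ring
  have hP1 : qPoch q (a * b * q ^ 2) (2 * r + 1) ≠ 0 := qPoch_ne_zero_of_le h0 (by omega)
  have hsgn : (-c) ^ (r + 2) = (-1) ^ (r + 2) * c ^ (r + 2) := neg_pow _ _
  have hsga : (-a) ^ (r + 1) = (-1) ^ (r + 1) * a ^ (r + 1) := neg_pow _ _
  have hs2 : ((-1 : ℂ)) ^ (r + 2) * (-1) ^ (r + 1) = -1 := by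
    rw [← pow_add]; exact Odd.neg_one_pow ⟨r + 1, by omega⟩
  rw [hrow, jacobiCoeff_self, ← hc, p3]
  have hfin : (1 - c * q ^ (r + 1)) / (qPoch q (a * b * q ^ 2) r * qPoch q c (r + 2))
      = 1 / qPoch q (a * b * q ^ 2) (2 * r + 1) := by
    rw [div_eq_div_iff (mul_ne_zero hU hcn') hP1, ← p2]; ring
  set w := qPoch q (b * q) (r + 1)
  set Q2 := q ^ ((r + 2).choose 2) with hQ2
  have hQ : q ^ (2 * (r + 2).choose 2) = Q2 * Q2 := by rw [hQ2, two_mul, pow_add]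
  calc _ = qPoch q (a * q) (r + 2) * ((-1) ^ (r + 2) * (g.eval c⁻¹ * c ^ (r + 2)) * Q2 *
        qPoch q q (r + 2) / qPoch q c (r + 2 + 1)) /
        (qPoch q (a * b * q ^ 2) r * qPoch q c (r + 2)) := by
          rw [hsgn]; field_simp
    _ = ((-1) ^ (r + 2) * (-1) ^ (r + 1)) * (a ^ (r + 1) * (Q2 * Q2) * qPoch q (a * q) (r + 2) *
        qPoch q q (r + 2) * w / qPoch q c (r + 2 + 1)) *
        ((1 - c * q ^ (r + 1)) / (qPoch q (a * b * q ^ 2) r * qPoch q c (r + 2))) := by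
          rw [hgc, hsga]; ring
    _ = _ := by
          rw [hfin, hs2, hQ]
          generalize qPoch q (a * b * q ^ 2) (2 * r + 1) = P1 at hP1 ⊢
          generalize qPoch q (a * b * q ^ 2) r = U at hU ⊢
          field_simp

/-! ### Assembling the determinant -/

/-- The quotients whose squares multiply to the determinant; `blockFactor k` comes from the basis
polynomials of degrees `2k` and `2k + 1`. -/
noncomputable def blockFactor (q a b : ℂ) : ℕ → ℂ
  | 0 => (1 - q) * (1 - a * q) / (1 - a * b * q ^ 2)
  | k + 1 => a ^ (2 * k + 2) * q ^ ((2 * k + 2) * (2 * k + 3)) * qPoch q (a * q) (2 * k + 3) *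
      qPoch q q (2 * k + 3) * qPoch q (b * q) (2 * k + 2) * qPoch q (a * b * q ^ 2) (2 * k + 1) /
      (qPoch q (a * b * q ^ 2) (4 * k + 5) * qPoch q (a * b * q ^ 2) (4 * k + 3))

lemma det_eq_prod_blockFactor {q a b : ℂ} (hq : q ≠ 0) (ha : a ≠ 0) (hb : b ≠ 0) {m : ℕ}
    (h0 : qPoch q (a * b * q ^ 2) (4 * m - 3) ≠ 0) :
    Matrix.det (Matrix.of fun i j : Fin (2 * m) => entry q a b i j)
      = ∏ k ∈ Finset.range m, blockFactor q a b k ^ 2 := by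
  set T : ℕ → ℕ → ℂ := jacobiCoeff q a b with hT
  set S : ℕ → ℕ → ℂ := fun i j =>
    ∑ l ∈ Finset.range (2 * m), rowPair q a b (2 * m) i l * T j l with hS
  have hprod : (Matrix.of fun i j : Fin (2 * m) => S i j)
      = (Matrix.of fun i j : Fin (2 * m) => T i j) *
        (Matrix.of fun i j : Fin (2 * m) => entry q a b i j) *
        (Matrix.of fun i j : Fin (2 * m) => T i j).transpose := by
    ext i j
    simp only [Matrix.mul_apply, Matrix.of_apply, Matrix.transpose_apply, hS, rowPair,
      Finset.sum_range]
    rfl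
  have hskew : ∀ i j, S j i = - S i j := by
    intro i j
    simp only [hS, rowPair, Finset.sum_mul, ← Finset.sum_neg_distrib]
    rw [Finset.sum_comm]
    refine Finset.sum_congr rfl fun k _ => Finset.sum_congr rfl fun l _ => ?_
    rw [entry_skew q a b l k]
    ring
  have htri : ∀ i j, i < 2 * m → j + 2 ≤ i → S i j = 0 := by
    intro i j hi hij
    obtain ⟨r, rfl⟩ : ∃ r, i = r + 2 := ⟨i - 2, by omega⟩
    refine Finset.sum_eq_zero fun l _ => ?_
    rcases lt_or_ge j l with h | h
    · rw [hT, jacobiCoeff_of_lt q a b h, mul_zero]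
    · rw [rowPair_eq_zero (by omega) hi (qPoch_ne_zero_of_le h0 (by omega)), zero_mul]
  have hTne : ∀ n, n < 2 * m → T n n ≠ 0 := by
    intro n hn
    match n with
    | 0 => rw [hT, jacobiCoeff_zero]; exact one_ne_zero
    | 1 => rw [hT, jacobiCoeff_one]; exact one_ne_zero
    | r + 2 => rw [hT, jacobiCoeff_self]; exact qPoch_shift_ne_zero h0 (by omega)
  have hdetT : Matrix.det (Matrix.of fun i j : Fin (2 * m) => T i j)
      = ∏ k ∈ Finset.range m, (T (2 * k) (2 * k) * T (2 * k + 1) (2 * k + 1)) := by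
    have hlow : (Matrix.of fun i j : Fin (2 * m) => T i j).IsLowerTriangular := by
      intro i j hij
      exact jacobiCoeff_of_lt q a b (Fin.lt_def.1 (OrderDual.toDual_lt_toDual.1 hij))
    rw [Matrix.det_of_isLowerTriangular _ hlow]
    simp only [Matrix.of_apply]
    rw [← Finset.prod_range fun n => T n n]
    clear * -
    induction m with
    | zero => simp
    | succ m ih =>
      rw [show 2 * (m + 1) = 2 * m + 1 + 1 by ring, Finset.prod_range_succ, Finset.prod_range_succ,
        ih, Finset.prod_range_succ]
      ring
  have hfac : ∀ k ∈ Finset.range m, S (2 * k + 1) (2 * k) ^ 2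
      = (T (2 * k) (2 * k) * T (2 * k + 1) (2 * k + 1)) ^ 2 * blockFactor q a b k ^ 2 := by
    intro k hk
    have hk := Finset.mem_range.1 hk
    match k with
    | 0 =>
      have e1 : S 1 0 = entry q a b 1 0 := by
        simp only [hS]
        rw [Finset.sum_eq_single 0]
        · rw [hT, jacobiCoeff_zero, mul_one, rowPair, Finset.sum_eq_single 1]
          · rw [jacobiCoeff_one, one_mul]
          · intro b _ hb; simp [jacobiCoeff, hb]
          · intro h; exact absurd (Finset.mem_range.2 (by omega)) h
        · intro l _ hl
          rw [hT, jacobiCoeff_of_lt q a b (by omega), mul_zero]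
        · intro h; exact absurd (Finset.mem_range.2 (by omega)) h
      simp only [mul_zero, zero_add]
      rw [e1, hT, jacobiCoeff_zero, jacobiCoeff_one]
      simp only [entry, blockFactor, qPoch, add_zero, Finset.prod_range_one, pow_zero, pow_one,
        mul_one]
      ring
    | k + 1 =>
      have e1 : S (2 * (k + 1) + 1) (2 * (k + 1))
          = rowPair q a b (2 * m) (2 * k + 1 + 2) (2 * k + 1 + 1) *
            T (2 * (k + 1)) (2 * (k + 1)) := by
        simp only [hS]
        rw [Finset.sum_eq_single (2 * (k + 1))]
        · rfl
        · intro l _ hl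
          rcases lt_or_ge (2 * (k + 1)) l with h | h
          · rw [hT, jacobiCoeff_of_lt q a b h, mul_zero]
          · rw [show 2 * (k + 1) + 1 = 2 * k + 1 + 2 by ring,
              rowPair_eq_zero (by omega) (by omega) (qPoch_ne_zero_of_le h0 (by omega)), zero_mul]
        · intro h; exact absurd (Finset.mem_range.2 (by omega)) h
      have e2 := rowPair_div hq ha hb (N := 2 * m) (r := 2 * k + 1) (by omega)
        (qPoch_ne_zero_of_le h0 (by omega))
      have hch : 2 * (2 * k + 1 + 2).choose 2 = (2 * k + 2) * (2 * k + 3) := by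
        have := Nat.choose_two_right (2 * k + 1 + 2)
        have h2 : 2 ∣ (2 * k + 1 + 2) * (2 * k + 1 + 2 - 1) :=
          (Nat.even_mul_pred_self _).two_dvd
        rw [this, Nat.mul_div_cancel' h2, show 2 * k + 1 + 2 - 1 = 2 * k + 2 by omega]
        ring
      rw [hch] at e2
      have e3 : rowPair q a b (2 * m) (2 * k + 1 + 2) (2 * k + 1 + 1)
          = - blockFactor q a b (k + 1) * T (2 * k + 1 + 2) (2 * k + 1 + 2) := by
        rw [div_eq_iff (hTne _ (by omega))] at e2
        rw [e2, blockFactor]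
        rw [show 2 * (2 * k + 1) + 3 = 4 * k + 5 by ring,
          show 2 * (2 * k + 1) + 1 = 4 * k + 3 by ring]
      rw [e1, e3, show 2 * (k + 1) + 1 = 2 * k + 1 + 2 by ring]
      ring
  have hdet := congrArg Matrix.det hprod
  rw [Matrix.det_mul, Matrix.det_mul, Matrix.det_transpose, det_skew_tridiagonal m S hskew htri,
    Finset.prod_congr rfl hfac, Finset.prod_mul_distrib, Finset.prod_pow _ 2, ← hdetT] at hdet
  have hdne : Matrix.det (Matrix.of fun i j : Fin (2 * m) => T i j) ≠ 0 := by
    rw [hdetT]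
    refine Finset.prod_ne_zero_iff.2 fun k hk => ?_
    have hk := Finset.mem_range.1 hk
    exact mul_ne_zero (hTne _ (by omega)) (hTne _ (by omega))
  refine mul_left_cancel₀ (pow_ne_zero 2 hdne) ?_
  rw [hdet]; ring

lemma exponent_succ (m : ℕ) :
    2 * (m + 1) * (m + 1 - 1) * (4 * (m + 1) + 1) / 3
      = 2 * m * (m - 1) * (4 * m + 1) / 3 + 4 * m * (2 * m + 1) := by
  have h : 2 * (m + 1) * (m + 1 - 1) * (4 * (m + 1) + 1)
      = 2 * m * (m - 1) * (4 * m + 1) + 3 * (4 * m * (2 * m + 1)) := by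
    cases m with
    | zero => rfl
    | succ m => simp only [Nat.add_sub_cancel]; ring
  rw [h, Nat.add_mul_div_left _ _ (by norm_num)]

lemma prod_blockFactor {q a b : ℂ} {m : ℕ} (hm : 1 ≤ m) :
    qPoch q (a * b * q ^ 2) (4 * m - 3) ≠ 0 →
    ∏ k ∈ Finset.range m, blockFactor q a b k ^ 2
      = a ^ (2 * m * (m - 1)) * q ^ (2 * m * (m - 1) * (4 * m + 1) / 3) *
          ∏ k ∈ Finset.Icc 1 m,
            (qPoch q q (2 * k - 1) * qPoch q (a * q) (2 * k - 1) * qPoch q (b * q) (2 * k - 2) /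
              qPoch q (a * b * q ^ 2) (2 * (k + m) - 3)) ^ 2 := by
  induction m, hm using Nat.le_induction with
  | base =>
    intro _
    simp [blockFactor, qPoch]
  | succ m hm ih =>
    intro h0
    set P := qPoch q (a * b * q ^ 2) with hP
    have hPne : ∀ n, n ≤ 4 * m + 1 → P n ≠ 0 := fun n hn => qPoch_ne_zero_of_le h0 (by omega)
    -- Replacing `m` by `m + 1` shifts the index of the denominators by one, so the two products
    -- agree up to their end factors.
    have hden : ∀ M : ℕ, (∏ k ∈ Finset.Icc 1 M, P (2 * (k + (m + 1)) - 3)) * P (2 * m - 1)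
        = (∏ k ∈ Finset.Icc 1 M, P (2 * (k + m) - 3)) * P (2 * (M + m) - 1) := by
      intro M
      induction M with
      | zero => simp
      | succ M ihM =>
        rw [Finset.prod_Icc_succ_top (by omega), Finset.prod_Icc_succ_top (by omega),
          mul_right_comm, ihM, show 2 * (M + 1 + (m + 1)) - 3 = 2 * (M + 1 + m) - 1 by omega,
          show 2 * (M + 1 + m) - 3 = 2 * (M + m) - 1 by omega]
    have hden := hden m
    have hE : (∏ k ∈ Finset.Icc 1 m, P (2 * (k + m) - 3)) ≠ 0 :=
      Finset.prod_ne_zero_iff.2 fun k hk => hPne _ (by have := Finset.mem_Icc.1 hk; omega)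
    have hE1 : (∏ k ∈ Finset.Icc 1 m, P (2 * (k + (m + 1)) - 3)) ≠ 0 :=
      Finset.prod_ne_zero_iff.2 fun k hk => hPne _ (by have := Finset.mem_Icc.1 hk; omega)
    have hb : blockFactor q a b m = a ^ (2 * m) * q ^ (2 * m * (2 * m + 1)) *
        (qPoch q q (2 * m + 1) * qPoch q (a * q) (2 * m + 1) * qPoch q (b * q) (2 * m)) *
        P (2 * m - 1) / (P (4 * m + 1) * P (4 * m - 1)) := by
      obtain ⟨k, rfl⟩ : ∃ k, m = k + 1 := ⟨m - 1, by omega⟩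
      rw [blockFactor, ← hP, show 2 * (k + 1) + 1 = 2 * k + 3 by ring,
        show 2 * (k + 1) = 2 * k + 2 by ring, show 4 * (k + 1) + 1 = 4 * k + 5 by ring,
        show 4 * (k + 1) - 1 = 4 * k + 3 by omega, show 2 * k + 2 - 1 = 2 * k + 1 by omega]
      ring
    have ea : 2 * (m + 1) * (m + 1 - 1) = 2 * m * (m - 1) + 2 * (2 * m) := by
      obtain ⟨k, rfl⟩ : ∃ k, m = k + 1 := ⟨m - 1, by omega⟩
      simp only [Nat.add_sub_cancel]
      ring
    rw [Finset.prod_range_succ, ih (hPne _ (by omega)), exponent_succ, ea, hb,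
      Finset.prod_pow _ 2, Finset.prod_pow _ 2, Finset.prod_Icc_succ_top (by omega),
      Finset.prod_div_distrib, Finset.prod_div_distrib,
      show 2 * (m + 1) - 1 = 2 * m + 1 by omega, show 2 * (m + 1) - 2 = 2 * m by omega,
      show 2 * (m + 1 + (m + 1)) - 3 = 4 * m + 1 by omega]
    rw [show 2 * (m + m) - 1 = 4 * m - 1 by omega] at hden
    have h1 := hPne (4 * m + 1) le_rfl
    have h2 := hPne (4 * m - 1) (by omega)
    generalize (∏ k ∈ Finset.Icc 1 m, P (2 * (k + m) - 3)) = E at hden hE ⊢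
    generalize (∏ k ∈ Finset.Icc 1 m, P (2 * (k + (m + 1)) - 3)) = E1 at hden hE1 ⊢
    generalize P (4 * m + 1) = P1 at hden h1 ⊢
    generalize P (4 * m - 1) = P2 at hden h2 ⊢
    generalize P (2 * m - 1) = P3 at hden ⊢
    have hquot : P3 / (E * (P1 * P2)) = 1 / (E1 * P1) := by
      rw [div_eq_div_iff (by positivity) (by positivity)]
      linear_combination P1 * hden
    generalize (∏ k ∈ Finset.Icc 1 m, (qPoch q q (2 * k - 1) * qPoch q (a * q) (2 * k - 1) *
      qPoch q (b * q) (2 * k - 2))) = A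
    generalize qPoch q q (2 * m + 1) * qPoch q (a * q) (2 * m + 1) * qPoch q (b * q) (2 * m) = B
    rw [pow_add, pow_add, show 4 * m * (2 * m + 1) = 2 * (2 * m * (2 * m + 1)) by ring,
      mul_comm 2 (2 * m), mul_comm 2 (2 * m * (2 * m + 1)), pow_mul a _ 2,
      pow_mul q (2 * m * (2 * m + 1)) 2]
    generalize a ^ (2 * m * (m - 1)) = a1
    generalize q ^ (2 * m * (m - 1) * (4 * m + 1) / 3) = q1
    generalize q ^ (2 * m * (2 * m + 1)) = q2
    generalize a ^ (2 * m) = a2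
    calc _ = a1 * q1 * a2 ^ 2 * q2 ^ 2 * (A * B) ^ 2 * (P3 / (E * (P1 * P2))) ^ 2 := by ring
      _ = _ := by rw [hquot]; ring

/-- Determinant evaluation (Corollary 3.3): for `m ≥ 1`,
`det((q^{i-1} - q^{j-1}) (aq;q)_{i+j-2} / (abq²;q)_{i+j-2})_{1 ≤ i,j ≤ 2m}
 = a^{2m(m-1)} q^{2m(m-1)(4m+1)/3}
   ∏_{k=1}^m ((q;q)_{2k-1} (aq;q)_{2k-1} (bq;q)_{2k-2} / (abq²;q)_{2(k+m)-3})²`. -/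
theorem det_even_case
    (q a b : ℂ) (hq : q ≠ 0) (ha : a ≠ 0) (hb : b ≠ 0)
    (m : ℕ) (hm : 1 ≤ m) (habq : qPoch q (a * b * q ^ 2) (4 * m - 3) ≠ 0) :
    Matrix.det (Matrix.of fun i j : Fin (2 * m) =>
        (q ^ (i : ℕ) - q ^ (j : ℕ)) *
          qPoch q (a * q) ((i : ℕ) + (j : ℕ)) / qPoch q (a * b * q ^ 2) ((i : ℕ) + (j : ℕ)))
      = a ^ (2 * m * (m - 1)) * q ^ (2 * m * (m - 1) * (4 * m + 1) / 3) *
          ∏ k ∈ Finset.Icc 1 m,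
            (qPoch q q (2 * k - 1) * qPoch q (a * q) (2 * k - 1) * qPoch q (b * q) (2 * k - 2) /
              qPoch q (a * b * q ^ 2) (2 * (k + m) - 3)) ^ 2 := by
  have h := det_eq_prod_blockFactor hq ha hb habq
  rw [prod_blockFactor hm habq] at h
  exact h
end

section
/- Let q and a be nonzero complex numbers and n ≥ 0 an integer, and assume the n+1 numbers b_j = (q^{−j}/a + a q^{j})/2, j = 0, 1, …, n, are pairwise distinct (equivalently, all the factorials (q;q)_j, (q^{1−2j}/a²;q)_j, (q^{2j+1}a²;q)_{k−j} appearing below are nonzero). Then for every polynomial f over ℂ of degree at most n and every nonzero complex number z, writing x = (z + z^{−1})/2, one has f(x) = Σ_{k=0}^{n} (az;q)_k (a/z;q)_k · Σ_{j=0}^{k} q^{k − j²} a^{−2j} f((q^{j} a + q^{−j}/a)/2) / [(q;q)_j (q^{1−2j}/a²;q)_j (q;q)_{k−j} (q^{2j+1}a²;q)_{k−j}]. -/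
open Finset Polynomial in
/-- Newton's interpolation formula with divided differences, over a field. -/
lemma newton_eval {F : Type*} [Field F] (v : ℕ → F) (x : F) (n : ℕ)
    (hv : Set.InjOn v (range n : Finset ℕ)) (f : F[X]) (hf : f.degree < n) :
    f.eval x = ∑ k ∈ range n, (∏ i ∈ range k, (x - v i)) *
      ∑ j ∈ range (k + 1), f.eval (v j) / ∏ i ∈ (range (k + 1)).erase j, (v j - v i) := by
  induction n generalizing f with
  | zero =>
    have : f = 0 := by
      rw [← Polynomial.degree_eq_bot]
      simpa [Nat.WithBot.lt_zero_iff] using hf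
    simp [this]
  | succ n ih =>
    have hc := Lagrange.coeff_eq_sum hv (P := f) (by simpa using hf)
    simp only [card_range, Nat.add_sub_cancel] at hc
    set g : F[X] := f - C (f.coeff n) * Lagrange.nodal (range n) v with hg
    have hgdeg : g.degree < n := by
      rw [Polynomial.degree_lt_iff_coeff_zero]
      intro m hm
      have hnd : (Lagrange.nodal (range n) v).natDegree = n := by
        simp [Lagrange.natDegree_nodal]
      rcases hm.eq_or_lt with rfl | hm
      · have h1 : (Lagrange.nodal (range n) v).coeff n = 1 := by
          have := (Lagrange.nodal_monic (s := range n) (v := v)).coeff_natDegree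
          rwa [hnd] at this
        rw [hg, coeff_sub, coeff_C_mul, h1, mul_one, sub_self]
      · have h1 : (Lagrange.nodal (range n) v).coeff m = 0 :=
          coeff_eq_zero_of_natDegree_lt (by omega)
        have h2 : f.coeff m = 0 :=
          coeff_eq_zero_of_degree_lt (hf.trans_le (by exact_mod_cast hm))
        rw [hg, coeff_sub, coeff_C_mul, h1, h2, mul_zero, sub_self]
    have hgv : ∀ j ∈ range n, g.eval (v j) = f.eval (v j) := by
      intro j hj
      rw [hg, eval_sub, eval_mul, Lagrange.eval_nodal_at_node hj, mul_zero, sub_zero]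
    have hI := ih (hv.mono (by simp)) g hgdeg
    have hfg : f.eval x = g.eval x + f.coeff n * ∏ i ∈ range n, (x - v i) := by
      rw [hg, eval_sub, eval_mul, eval_C, Lagrange.eval_nodal]
      ring
    rw [sum_range_succ, hfg, hI, ← hc, mul_comm (f.coeff n)]
    congr 1
    refine sum_congr rfl fun k hk => ?_
    congr 1
    refine sum_congr rfl fun j hj => ?_
    rw [hgv j (by simp only [mem_range] at hk hj ⊢; omega)]

/-- The Askey-Wilson node `b_i = (q^i a + q^{-i}/a)/2`. -/
noncomputable def awNode (q a : ℂ) (i : ℕ) : ℂ := (q ^ i * a + (q ^ i)⁻¹ / a) / 2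

lemma aw_factor {q a z : ℂ} (hq : q ≠ 0) (ha : a ≠ 0) (hz : z ≠ 0) (i : ℕ) :
    (1 - a * z * q ^ i) * (1 - a / z * q ^ i) =
      (-2 * a * q ^ i) * ((z + z⁻¹) / 2 - awNode q a i) := by
  have := pow_ne_zero i hq
  unfold awNode
  field_simp
  ring

/-- The Newton basis polynomial on the first `k` nodes, up to normalization. -/
lemma aw_basis {q a z : ℂ} (hq : q ≠ 0) (ha : a ≠ 0) (hz : z ≠ 0) (k : ℕ) :
    qPoch q (a * z) k * qPoch q (a / z) k =
      (∏ i ∈ Finset.range k, (-2 * a * q ^ i)) *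
        ∏ i ∈ Finset.range k, ((z + z⁻¹) / 2 - awNode q a i) := by
  simp only [qPoch, ← Finset.prod_mul_distrib]
  exact Finset.prod_congr rfl fun i _ => aw_factor hq ha hz i

lemma aw_node_factor {q a : ℂ} (hq : q ≠ 0) (ha : a ≠ 0) (i j : ℕ) :
    (-2 * a * q ^ i) * (awNode q a j - awNode q a i) =
      (1 - a ^ 2 * q ^ j * q ^ i) * (1 - q ^ i / q ^ j) := by
  have h1 := pow_ne_zero i hq
  have h2 := pow_ne_zero j hq
  unfold awNode
  field_simp
  ring

/-- Contribution of the nodes after `b_j` to the denominator of the divided difference. -/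
lemma aw_upper {q a : ℂ} (hq : q ≠ 0) (ha : a ≠ 0) (j m : ℕ) :
    ∏ s ∈ Finset.range m, ((-2 * a * q ^ (j + 1 + s)) * (awNode q a j - awNode q a (j + 1 + s))) =
      qPoch q q m * qPoch q (q ^ (2 * (j : ℤ) + 1) * a ^ 2) m := by
  simp only [qPoch, ← Finset.prod_mul_distrib]
  refine Finset.prod_congr rfl fun s _ => ?_
  have h2 := pow_ne_zero j hq
  have h3 : q ^ (2 * (j : ℤ) + 1) = q ^ (2 * j + 1) := by
    rw [← zpow_natCast]; norm_cast
  have h4 : q ^ (j + 1 + s) / q ^ j = q * q ^ s := by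
    rw [div_eq_iff h2]; ring
  rw [aw_node_factor hq ha, h3, h4]
  ring

lemma prod_pow_two_mul (q a : ℂ) (hq : q ≠ 0) (j : ℕ) :
    ∏ i ∈ Finset.range j, (a ^ 2 * q ^ (2 * i)) = a ^ (2 * j) * q ^ ((j : ℤ) ^ 2 - j) := by
  induction j with
  | zero => simp
  | succ j ih =>
    rw [Finset.prod_range_succ, ih]
    have : q ^ (((j + 1 : ℕ) : ℤ) ^ 2 - (j + 1 : ℕ)) = q ^ ((j : ℤ) ^ 2 - j) * q ^ (2 * j) := by
      rw [← zpow_natCast q (2 * j), ← zpow_add₀ hq]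
      congr 1
      push_cast
      ring
    rw [this]
    ring

/-- Contribution of the nodes before `b_j` to the denominator of the divided difference. -/
lemma aw_lower {q a : ℂ} (hq : q ≠ 0) (ha : a ≠ 0) (j : ℕ) :
    ∏ i ∈ Finset.range j, ((-2 * a * q ^ i) * (awNode q a j - awNode q a i)) =
      a ^ (2 * j) * q ^ ((j : ℤ) ^ 2 - j) *
        (qPoch q q j * qPoch q (q ^ (1 - 2 * (j : ℤ)) / a ^ 2) j) := by
  -- The factor of index `i` on the left matches those of index `j - 1 - i` on the right.
  rw [← prod_pow_two_mul q a hq j]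
  unfold qPoch
  rw [← Finset.prod_range_reflect (fun k => 1 - q * q ^ k),
    ← Finset.prod_range_reflect (fun k => 1 - q ^ (1 - 2 * (j : ℤ)) / a ^ 2 * q ^ k)]
  simp only [← Finset.prod_mul_distrib]
  refine Finset.prod_congr rfl fun i hi => ?_
  obtain ⟨r, rfl⟩ : ∃ r, j = i + 1 + r :=
    ⟨j - (i + 1), by have := Finset.mem_range.1 hi; omega⟩
  have h0 : i + 1 + r - 1 - i = r := by omega
  have h1 := pow_ne_zero i hq
  have h2 := pow_ne_zero r hq
  have h3 : q ^ (1 - 2 * ((i + 1 + r : ℕ) : ℤ)) = (q ^ (2 * i + 1 + 2 * r))⁻¹ := by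
    rw [← zpow_natCast, ← zpow_neg]
    congr 1
    push_cast
    ring
  rw [aw_node_factor hq ha, h0, h3]
  simp only [pow_add, pow_mul', pow_one]
  field_simp
  ring

lemma aw_leading_prod (q a : ℂ) (j m : ℕ) :
    (∏ i ∈ Finset.range j, (-2 * a * q ^ i)) *
        ∏ s ∈ Finset.range m, (-2 * a * q ^ (j + 1 + s)) =
      (∏ i ∈ Finset.range (j + m), (-2 * a * q ^ i)) * q ^ m := by
  induction m with
  | zero => simp
  | succ m ih =>
    rw [Finset.prod_range_succ, ← mul_assoc, ih, ← Nat.add_assoc, Finset.prod_range_succ]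
    ring

/-- The denominator of the divided difference on `b_0, …, b_{j+m}` at `b_j`, in terms of q-shifted
factorials. -/
lemma aw_denominator {q a : ℂ} (hq : q ≠ 0) (ha : a ≠ 0) (j m : ℕ) :
    (∏ i ∈ Finset.range (j + m), (-2 * a * q ^ i)) * q ^ m *
        ∏ i ∈ (Finset.range (j + m + 1)).erase j, (awNode q a j - awNode q a i) =
      a ^ (2 * j) * q ^ ((j : ℤ) ^ 2 - j) *
        ((qPoch q q j * qPoch q (q ^ (1 - 2 * (j : ℤ)) / a ^ 2) j) *
          (qPoch q q m * qPoch q (q ^ (2 * (j : ℤ) + 1) * a ^ 2) m)) := by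
  have hs : (Finset.range (j + m + 1)).erase j =
      Finset.range j ∪ Finset.Ico (j + 1) (j + m + 1) := by
    ext i
    simp only [Finset.mem_erase, Finset.mem_range, Finset.mem_union, Finset.mem_Ico]
    omega
  have hd : Disjoint (Finset.range j) (Finset.Ico (j + 1) (j + m + 1)) := by
    rw [Finset.disjoint_left]
    intro i
    simp only [Finset.mem_range, Finset.mem_Ico]
    omega
  have hm : j + m + 1 - (j + 1) = m := by omega
  rw [hs, Finset.prod_union hd, Finset.prod_Ico_eq_prod_range, hm, ← aw_leading_prod,
    ← mul_assoc (a ^ (2 * j) * q ^ ((j : ℤ) ^ 2 - j)), ← aw_lower hq ha, ← aw_upper hq ha,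
    Finset.prod_mul_distrib (f := fun i => -2 * a * q ^ i),
    Finset.prod_mul_distrib (f := fun s => -2 * a * q ^ (j + 1 + s))]
  ac_rfl

/-- Newton interpolation at the Askey-Wilson nodes `b_j = (q^{-j}/a + a q^j)/2`
(equation (4.11), Proposition 3.1 of Corteel-Stanley-Stanton-Williams): for any
polynomial `f` of degree at most `n`, with `x = (z + z⁻¹)/2`,
`f(x) = Σ_{k=0}^n (az;q)_k (a/z;q)_k Σ_{j=0}^k q^{k-j²} a^{-2j} f((q^j a + q^{-j}/a)/2)
  / ((q;q)_j (q^{1-2j}/a²;q)_j (q;q)_{k-j} (q^{2j+1}a²;q)_{k-j})`. -/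
theorem newton_interpolation_askey_wilson_nodes
    (q a : ℂ) (hq : q ≠ 0) (ha : a ≠ 0) (n : ℕ)
    (hdistinct : ∀ i ≤ n, ∀ j ≤ n, i ≠ j →
      (q ^ (-(i : ℤ)) / a + a * q ^ (i : ℕ)) / 2 ≠ (q ^ (-(j : ℤ)) / a + a * q ^ (j : ℕ)) / 2)
    (f : Polynomial ℂ) (hf : f.degree ≤ n) (z : ℂ) (hz : z ≠ 0) (x : ℂ)
    (hx : x = (z + z⁻¹) / 2) :
    f.eval x =
      ∑ k ∈ Finset.range (n + 1),
        qPoch q (a * z) k * qPoch q (a / z) k *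
          ∑ j ∈ Finset.range (k + 1),
            q ^ ((k : ℤ) - (j : ℤ) ^ 2) * a ^ (-2 * (j : ℤ)) *
              f.eval ((q ^ (j : ℕ) * a + q ^ (-(j : ℤ)) / a) / 2) /
              (qPoch q q j * qPoch q (q ^ (1 - 2 * (j : ℤ)) / a ^ 2) j *
                (qPoch q q (k - j) * qPoch q (q ^ (2 * (j : ℤ) + 1) * a ^ 2) (k - j))) := by
  -- Both shapes of the nodes in the statement agree with `awNode`.
  have hb : ∀ j : ℕ, (q ^ j * a + q ^ (-(j : ℤ)) / a) / 2 = awNode q a j := by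
    intro j
    rw [awNode, zpow_neg, zpow_natCast]
  have hb' : ∀ j : ℕ, (q ^ (-(j : ℤ)) / a + a * q ^ j) / 2 = awNode q a j := by
    intro j
    rw [← hb]
    ring
  have hinj : Set.InjOn (awNode q a) (Finset.range (n + 1) : Finset ℕ) := by
    intro i hi j hj hij
    by_contra hne
    simp only [Finset.coe_range, Set.mem_Iio] at hi hj
    exact hdistinct i (by omega) j (by omega) hne (by rw [hb', hb', hij])
  have hf' : f.degree < (n + 1 : ℕ) := hf.trans_lt (by exact_mod_cast Nat.lt_succ_self n)
  rw [newton_eval (awNode q a) x (n + 1) hinj f hf']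
  refine Finset.sum_congr rfl fun k _ => ?_
  rw [aw_basis hq ha hz, ← hx, mul_comm (∏ i ∈ Finset.range k, (-2 * a * q ^ i)), mul_assoc]
  congr 1
  rw [Finset.mul_sum]
  refine Finset.sum_congr rfl fun j hj => ?_
  obtain ⟨m, rfl⟩ : ∃ m, k = j + m := ⟨k - j, by have := Finset.mem_range.1 hj; omega⟩
  have hA : (∏ i ∈ Finset.range (j + m), (-2 * a * q ^ i)) ≠ 0 :=
    Finset.prod_ne_zero_iff.2 fun i _ =>
      mul_ne_zero (mul_ne_zero (by norm_num) ha) (pow_ne_zero i hq)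
  have hN : ∏ i ∈ (Finset.range (j + m + 1)).erase j, (awNode q a j - awNode q a i) =
      a ^ (2 * j) * q ^ ((j : ℤ) ^ 2 - j) *
        (qPoch q q j * qPoch q (q ^ (1 - 2 * (j : ℤ)) / a ^ 2) j *
          (qPoch q q m * qPoch q (q ^ (2 * (j : ℤ) + 1) * a ^ 2) m)) /
        ((∏ i ∈ Finset.range (j + m), (-2 * a * q ^ i)) * q ^ m) := by
    rw [eq_div_iff (mul_ne_zero hA (pow_ne_zero m hq)), ← aw_denominator hq ha j m]
    ring
  have hqz : q ^ (((j + m : ℕ) : ℤ) - (j : ℤ) ^ 2) = q ^ m * (q ^ ((j : ℤ) ^ 2 - j))⁻¹ := by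
    rw [← zpow_neg, ← zpow_natCast, ← zpow_add₀ hq]
    congr 1
    push_cast
    ring
  have haz : a ^ (-2 * (j : ℤ)) = (a ^ (2 * j))⁻¹ := by
    rw [← zpow_natCast, ← zpow_neg]
    congr 1
  rw [hb, Nat.add_sub_cancel_left, hN, hqz, haz]
  simp only [div_eq_mul_inv, mul_inv, inv_inv]
  ring
end
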